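/- arXiv:1005.5725 — 5 statements merged into one kernel-verified Lean document; each statement's English description precedes it below -/
import Mathlib

section
/- Let ν ∈ N_d(n) and let j ∈ J(ν) be a break point of ν. Then the set {η ∈ N_d(n) : η ≼ ν and s_j(η) > s_j(ν)} has a unique maximal element ν^j; that is, there exists ν^j ∈ N_d(n) with ν^j ≼ ν and s_j(ν^j) > s_j(ν) such that every η ∈ N_d(n) with η ≼ ν and s_j(η) > s_j(ν) satisfies η ≼ ν^j. (GL_n instance of Lemma 2.2(1).) -/
/-- The `j`-th partial sum `s_j(ν) = ν_0 + … + ν_{j-1}` of a tuple (0-indexed). -/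
def psum (ν : ℕ → ℚ) (j : ℕ) : ℚ := ∑ i ∈ Finset.range j, ν i

/-- `ν` (given by its values on `{0, …, n-1}`) is a Newton point for `GL_n`
with endpoint `d`: nondecreasing, total sum `d`, and the partial sum at every
break point is an integer. -/
def IsNewton (n : ℕ) (d : ℤ) (ν : ℕ → ℚ) : Prop :=
  (∀ i, i + 1 < n → ν i ≤ ν (i + 1)) ∧
  psum ν n = (d : ℚ) ∧
  ∀ j, 0 < j → j < n → ν (j - 1) < ν j → ∃ m : ℤ, psum ν j = (m : ℚ)

/-- `j` is a break point of `ν` (in `1, …, n-1`; `ν (j-1) < ν j` is `ν_j < ν_{j+1}`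
in the 1-based notation of the paper). -/
def IsBreak (n : ℕ) (ν : ℕ → ℚ) (j : ℕ) : Prop := 0 < j ∧ j < n ∧ ν (j - 1) < ν j

/-- The dominance order: `ν' ≼ ν` iff `s_j(ν') ≥ s_j(ν)` for all `1 ≤ j ≤ n`. -/
def Preceq (n : ℕ) (ν' ν : ℕ → ℚ) : Prop := ∀ j, 1 ≤ j → j ≤ n → psum ν j ≤ psum ν' j

/-- Discrete maximum principle. -/
lemma max_principle (n : ℕ) (f : ℕ → ℚ) (h0 : f 0 ≤ 0) (hn : f n ≤ 0)
    (hc : ∀ i, i + 1 < n → 0 < f (i + 1) → 2 * f (i + 1) ≤ f i + f (i + 2)) :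
    ∀ i, i ≤ n → f i ≤ 0 := by
  by_contra! hcon
  obtain ⟨i, hi, hpos⟩ := hcon
  obtain ⟨m, hm, hmax⟩ := Finset.exists_max_image (Finset.range (n + 1)) f ⟨0, by simp⟩
  have hex : ∃ k, k ≤ n ∧ f m ≤ f k := ⟨m, by simpa [Nat.lt_succ_iff] using hm, le_rfl⟩
  classical
  obtain ⟨hk1, hk2⟩ := Nat.find_spec hex
  have hmin := fun l => Nat.find_min hex (m := l)
  set k := Nat.find hex
  have hi' := hmax i (by simp; omega)
  rcases Nat.eq_zero_or_pos k with hk | hk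
  · rw [hk] at hk2; linarith
  · obtain ⟨l, hl⟩ := Nat.exists_eq_succ_of_ne_zero hk.ne'
    rw [hl] at hk1 hk2 hmin
    rcases Nat.eq_or_lt_of_le hk1 with h | h
    · rw [h] at hk2; linarith
    · have h1 := hmin l (by omega)
      have h2 := hmax (l + 2) (by simp; omega)
      have h3 := hc l h (by simp only [Nat.succ_eq_add_one] at hk2; linarith)
      simp only [Nat.succ_eq_add_one] at hk2
      have h4 : f l < f m := by
        by_contra! h5
        exact h1 ⟨by omega, h5⟩
      linarith

/-- Existence of the lower convex hull of finitely many points. -/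
lemma hull_exists (n : ℕ) : ∀ g : ℕ → ℚ, ∃ h : ℕ → ℚ, h 0 = g 0 ∧ h n = g n ∧
    (∀ i, i ≤ n → h i ≤ g i) ∧
    ∀ i, i + 1 < n → 2 * h (i + 1) ≤ h i + h (i + 2) ∧
      (h (i + 1) = g (i + 1) ∨ 2 * h (i + 1) = h i + h (i + 2)) := by
  induction n using Nat.strong_induction_on with
  | _ n ih =>
  intro g
  rcases Nat.eq_zero_or_pos n with rfl | hn
  · exact ⟨g, rfl, rfl, fun _ _ => le_rfl, fun i hi => by omega⟩
  obtain ⟨b, hb, hbmin⟩ := Finset.exists_min_image (Finset.Icc 1 n)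
    (fun i => (g i - g 0) / (i : ℚ)) ⟨1, by simp; omega⟩
  rw [Finset.mem_Icc] at hb
  set σ : ℚ := (g b - g 0) / (b : ℚ) with hσ
  have hbpos : (0 : ℚ) < b := by exact_mod_cast hb.1
  have hgb : g b = g 0 + σ * b := by rw [hσ]; field_simp; ring
  have hline : ∀ i, i ≤ n → g 0 + σ * i ≤ g i := by
    intro i hi
    rcases Nat.eq_zero_or_pos i with rfl | hi0
    · simp
    · have h1 := hbmin i (by rw [Finset.mem_Icc]; omega)
      have h2 : (0 : ℚ) < i := by exact_mod_cast hi0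
      have h3 : σ ≤ (g i - g 0) / (i : ℚ) := h1
      rw [le_div_iff₀ h2] at h3
      linarith
  obtain ⟨h', h'0, h'n, h'le, h'c⟩ := ih (n - b) (by omega) (fun i => g (b + i))
  simp only [Nat.add_zero] at h'0
  have h'n2 : h' (n - b) = g n := by rw [h'n]; congr 1; omega
  have hlow : ∀ i, i ≤ n - b → g 0 + σ * ((b : ℚ) + i) - h' i ≤ 0 := by
    apply max_principle
    · rw [h'0]; push_cast; linarith
    · rw [h'n2]
      have := hline n le_rfl
      rw [Nat.cast_sub hb.2]
      linarith [mul_comm σ (n : ℚ), show σ * ((b : ℚ) + (n - b)) = σ * n by ring]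
    · intro i hi hp
      have h1 := hline (b + (i + 1)) (by omega)
      rcases (h'c i hi).2 with h2 | h2
      · rw [h2] at hp; push_cast at h1 hp; linarith
      · push_cast; linarith
  refine ⟨fun i => if i ≤ b then g 0 + σ * i else h' (i - b), by simp, ?_, ?_, ?_⟩
  · by_cases h : n ≤ b
    · have : n = b := by omega
      subst this
      simp [hgb]
    · simp only [h, if_false]; exact h'n2
  · intro i hi
    by_cases h : i ≤ b
    · simp only [h, if_true]; exact hline i hi
    · simp only [h, if_false]
      have := h'le (i - b) (by omega)
      rwa [show b + (i - b) = i by omega] at this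
  · intro i hi
    rcases lt_trichotomy (i + 1) b with h | h | h
    · simp only [show i + 1 ≤ b by omega, show i ≤ b by omega, show i + 2 ≤ b by omega, if_true]
      push_cast
      exact ⟨by linarith, Or.inr (by ring)⟩
    · simp only [show i + 1 ≤ b by omega, show i ≤ b by omega, show ¬ (i + 2 ≤ b) by omega,
        if_true, if_false, show i + 2 - b = 1 by omega]
      have h1 := hlow 1 (by omega)
      have h2 : (b : ℚ) = i + 1 := by rw [← h]; push_cast; rfl
      rw [h2] at h1
      push_cast at h1 ⊢
      refine ⟨by linarith, Or.inl ?_⟩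
      rw [h, hgb, h2]
    · obtain ⟨k, rfl⟩ : ∃ k, i = b + k := ⟨i - b, by omega⟩
      obtain ⟨h1, h2⟩ := h'c k (by omega)
      simp only [show ¬ (b + k + 1 ≤ b) by omega, show ¬ (b + k + 2 ≤ b) by omega, if_false,
        show b + k + 1 - b = k + 1 by omega, show b + k + 2 - b = k + 2 by omega]
      have h3 : (if b + k ≤ b then g 0 + σ * ((b + k : ℕ) : ℚ) else h' (b + k - b)) = h' k := by
        split_ifs with h4
        · have : k = 0 := by omega
          subst this
          rw [h'0, hgb]; simp
        · congr 1; omega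
      rw [h3]
      exact ⟨h1, h2⟩

lemma psum_succ' (ν : ℕ → ℚ) (k : ℕ) : psum ν (k + 1) = psum ν k + ν k := by
  simp [psum, Finset.sum_range_succ]

/-- GL_n instance of Lemma 2.2(1): for a break point `j` of `ν`, the set of Newton
points `η ≼ ν` with `s_j(η) > s_j(ν)` has a (unique) maximal element `ν^j`. -/
theorem newton_exists_max_below_breakpoint (n : ℕ) (d : ℤ) (hn : 1 ≤ n)
    (ν : ℕ → ℚ) (hν : IsNewton n d ν) (j : ℕ) (hj : IsBreak n ν j) :
    ∃ νj : ℕ → ℚ, IsNewton n d νj ∧ Preceq n νj ν ∧ psum ν j < psum νj j ∧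
      ∀ η : ℕ → ℚ, IsNewton n d η → Preceq n η ν → psum ν j < psum η j →
        Preceq n η νj := by
  obtain ⟨hmono, hend, hint⟩ := hν
  obtain ⟨hj0, hjn, hjb⟩ := hj
  obtain ⟨m, hm⟩ := hint j hj0 hjn hjb
  let z : ℕ → ℤ := fun i => if i = j then m + 1 else ⌈psum ν i⌉
  have hzj : z j = m + 1 := by simp [z]
  have hzne : ∀ i, i ≠ j → z i = ⌈psum ν i⌉ := fun i hi => by simp [z, hi]
  have hz : ∀ i, psum ν i ≤ z i := by
    intro i
    by_cases hi : i = j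
    · subst hi; rw [hzj, hm]; push_cast; linarith
    · rw [hzne i hi]; exact Int.le_ceil _
  obtain ⟨h, h0, hn', hle, hc⟩ := hull_exists n (fun i => (z i : ℚ))
  have p0 : ∀ η : ℕ → ℚ, psum η 0 = 0 := fun η => by simp [psum]
  have h0' : h 0 = 0 := by rw [h0, hzne 0 (by omega), p0]; simp
  have hnd : h n = d := by rw [hn', hzne n (by omega), hend]; simp
  have hps : ∀ k, psum (fun i => h (i + 1) - h i) k = h k := by
    intro k
    rw [psum, Finset.sum_range_sub, h0', sub_zero]
  have hlow : ∀ i, i ≤ n → psum ν i - h i ≤ 0 := by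
    apply max_principle
    · rw [p0, h0']; simp
    · rw [hend, hnd]; simp
    · intro i hi hp
      have h1 := hz (i + 1)
      have h2 := hmono i hi
      rcases (hc i hi).2 with h3 | h3
      · linarith
      · have h4 := psum_succ' ν i
        have h5 := psum_succ' ν (i + 1)
        rw [show i + 1 + 1 = i + 2 from rfl] at h5
        linarith
  refine ⟨fun i => h (i + 1) - h i, ⟨?_, ?_, ?_⟩, ?_, ?_, ?_⟩
  · intro i hi
    have := (hc i hi).1
    change h (i + 1) - h i ≤ h (i + 2) - h (i + 1)
    linarith
  · rw [hps, hnd]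
  · intro k hk0 hkn hb
    obtain ⟨l, rfl⟩ : ∃ l, k = l + 1 := ⟨k - 1, by omega⟩
    rw [hps]
    change h (l + 1) - h l < h (l + 2) - h (l + 1) at hb
    rcases (hc l hkn).2 with h3 | h3
    · exact ⟨_, h3⟩
    · linarith
  · intro k _ hk
    rw [hps]
    linarith [hlow k hk]
  · rw [hps]
    obtain ⟨l, rfl⟩ : ∃ l, j = l + 1 := ⟨j - 1, by omega⟩
    change ν l < ν (l + 1) at hjb
    have h1 := hlow (l + 1) (by omega)
    have h2 := hlow l (by omega)
    have h3 := hlow (l + 2) (by omega)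
    have h4 := psum_succ' ν l
    have h5 := psum_succ' ν (l + 1)
    rw [show l + 1 + 1 = l + 2 from rfl] at h5
    rcases (hc l hjn).2 with h6 | h6
    · rw [h6, hzj, hm]; push_cast; linarith
    · linarith
  · rintro η ⟨emono, eend, eint⟩ hle' hlt
    have key : ∀ i, i ≤ n → h i - psum η i ≤ 0 := by
      apply max_principle
      · rw [p0, h0']; simp
      · rw [eend, hnd]; simp
      · intro i hi hp
        have h1 := (hc i hi).1
        have h4 := psum_succ' η i
        have h5 := psum_succ' η (i + 1)
        rw [show i + 1 + 1 = i + 2 from rfl] at h5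
        rcases (emono i hi).lt_or_eq with h6 | h6
        · exfalso
          obtain ⟨q, hq⟩ := eint (i + 1) (by omega) hi h6
          have h7 : z (i + 1) ≤ q := by
            by_cases hij : i + 1 = j
            · subst hij
              rw [hzj]
              rw [hm, hq] at hlt
              have : m < q := by exact_mod_cast hlt
              omega
            · rw [hzne _ hij, Int.ceil_le, ← hq]
              exact hle' (i + 1) (by omega) (by omega)
          have h8 : (z (i + 1) : ℚ) ≤ q := by exact_mod_cast h7
          have h9 := hle (i + 1) (by omega)
          linarith
        · linarith
    intro k _ hk
    rw [hps]
    linarith [key k hk]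
end

section
/- Let ν', ν ∈ N_d(n) with ν' ≼ ν and δ(ν', ν) = 1. Then there exists a break point j ∈ J(ν) with s_j(ν') > s_j(ν), and for every break point j ∈ J(ν) with s_j(ν') > s_j(ν), the element ν' is the unique maximal element of {η ∈ N_d(n) : η ≼ ν and s_j(η) > s_j(ν)}; in particular every η ∈ N_d(n) with η ≼ ν and s_j(η) > s_j(ν) satisfies η ≼ ν'. (GL_n instance of Remark 2.3.) -/
theorem psum_le_of_breaks (n : ℕ) (d : ℤ) (ν' η : ℕ → ℚ) (hν' : IsNewton n d ν')
    (hη : IsNewton n d η) (hb : ∀ j, IsBreak n η j → psum ν' j ≤ psum η j) :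
    ∀ j, j ≤ n → psum ν' j ≤ psum η j := by
  by_contra hcon
  push Not at hcon
  obtain ⟨j0, hj0, hlt0⟩ := hcon
  obtain ⟨i, hi, hmax⟩ := Finset.exists_max_image (Finset.range (n + 1))
    (fun j => psum ν' j - psum η j) ⟨0, by simp⟩
  have hex : ∃ i, i ≤ n ∧ ∀ j, j ≤ n → psum ν' j - psum η j ≤ psum ν' i - psum η i :=
    ⟨i, by simpa [Nat.lt_succ_iff] using hi, fun j hj => hmax j (by simp; omega)⟩
  classical
  obtain ⟨hin, him⟩ := Nat.find_spec hex
  have hmin := fun m (hm : m < Nat.find hex) => Nat.find_min hex hm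
  generalize Nat.find hex = k at hin him hmin
  have hpos : 0 < psum ν' k - psum η k := by
    have := him j0 hj0
    linarith
  rcases k with _ | k
  · simp [psum] at hpos
  have hkn : k + 1 < n := by
    rcases Nat.lt_or_ge (k + 1) n with h | h
    · exact h
    · have : k + 1 = n := by omega
      rw [this, hν'.2.1, hη.2.1] at hpos
      simp at hpos
  have hnb : ¬ IsBreak n η (k + 1) := fun h => by
    have := hb _ h
    linarith
  have hη1 : η (k + 1) ≤ η k := by
    by_contra h
    exact hnb ⟨by omega, hkn, by simpa using h⟩
  have h1 := hν'.1 k hkn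
  have h2 := him (k + 2) (by omega)
  have e1 : ∀ (μ : ℕ → ℚ) m, psum μ (m + 1) = psum μ m + μ m := fun μ m => by
    simp [psum, Finset.sum_range_succ]
  rw [e1 ν' (k + 1), e1 η (k + 1)] at h2
  apply hmin k (by omega)
  refine ⟨by omega, fun j hj => ?_⟩
  have h3 := him j hj
  rw [e1 ν' k, e1 η k] at h3
  linarith

/-- GL_n instance of Remark 2.3: if `ν' ≼ ν` with `δ(ν', ν) = 1`, then some break
point `j` of `ν` satisfies `s_j(ν') > s_j(ν)`, and for every such break point `j`,
`ν'` is the (unique) maximal element of `{η : η ≼ ν, s_j(η) > s_j(ν)}`; in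
particular every `η ≼ ν` with `s_j(η) > s_j(ν)` satisfies `η ≼ ν'`. -/
theorem newton_delta_one_is_max_below_breakpoint (n : ℕ) (d : ℤ) (hn : 1 ≤ n)
    (ν' ν : ℕ → ℚ) (hν' : IsNewton n d ν') (hν : IsNewton n d ν)
    (hprec : Preceq n ν' ν)
    (hdelta : ∑ i ∈ Finset.Icc 1 (n - 1), (⌈psum ν' i⌉ - ⌈psum ν i⌉) = 1) :
    (∃ j, IsBreak n ν j ∧ psum ν j < psum ν' j) ∧
    ∀ j, IsBreak n ν j → psum ν j < psum ν' j →
      ∀ η : ℕ → ℚ, IsNewton n d η → Preceq n η ν → psum ν j < psum η j →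
        Preceq n η ν' := by
  have hterm : ∀ i ∈ Finset.Icc 1 (n - 1), 0 ≤ ⌈psum ν' i⌉ - ⌈psum ν i⌉ := fun i hi => by
    rw [Finset.mem_Icc] at hi
    have := Int.ceil_le_ceil (hprec i hi.1 (by omega))
    omega
  refine ⟨?_, ?_⟩
  · by_contra hcon
    push Not at hcon
    have hle := psum_le_of_breaks n d ν' ν hν' hν hcon
    have : ∑ i ∈ Finset.Icc 1 (n - 1), (⌈psum ν' i⌉ - ⌈psum ν i⌉) = 0 := by
      refine Finset.sum_eq_zero fun i hi => ?_
      have h0 := hterm i hi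
      rw [Finset.mem_Icc] at hi
      have := Int.ceil_le_ceil (hle i (by omega))
      omega
    omega
  · intro j hj hlt η hη hηprec hηlt
    suffices h : ∀ i, i ≤ n → psum ν' i ≤ psum η i from fun i _ hi => h i hi
    apply psum_le_of_breaks n d ν' η hν' hη
    intro i hi
    obtain ⟨m, hm⟩ := hη.2.2 i hi.1 hi.2.1 hi.2.2
    obtain ⟨l, hl⟩ := hν.2.2 j hj.1 hj.2.1 hj.2.2
    have hi1 := hi.1
    have hi2 := hi.2.1
    have hj1 := hj.1
    have hj2 := hj.2.1
    have hiI : i ∈ Finset.Icc 1 (n - 1) := by rw [Finset.mem_Icc]; omega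
    have hjI : j ∈ Finset.Icc 1 (n - 1) := by rw [Finset.mem_Icc]; omega
    have hcl : ⌈psum ν j⌉ = l := by rw [hl]; simp
    have hcl' : l < ⌈psum ν' j⌉ := by rw [Int.lt_ceil, ← hl]; exact hlt
    have key : ⌈psum ν' i⌉ ≤ m := by
      by_cases hij : i = j
      · subst hij
        have h1 := Finset.single_le_sum hterm hiI
        have h2 : l < m := by
          rw [hl, hm] at hηlt
          exact_mod_cast hηlt
        omega
      · have h1 := Finset.single_le_sum (s := (Finset.Icc 1 (n - 1)).erase j)
          (f := fun i => ⌈psum ν' i⌉ - ⌈psum ν i⌉)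
          (fun x hx => hterm x (Finset.mem_of_mem_erase hx))
          (Finset.mem_erase.2 ⟨hij, hiI⟩)
        have h2 := Finset.add_sum_erase _ (fun i => ⌈psum ν' i⌉ - ⌈psum ν i⌉) hjI
        have h3 : ⌈psum ν i⌉ ≤ m := by
          rw [Int.ceil_le, ← hm]
          exact hηprec i hi1 (by omega)
        omega
    rw [hm]
    exact Int.ceil_le.1 key
end

section
/- Let n ≥ 1 and let ν' = (ν'_1, …, ν'_n) and ν = (ν_1, …, ν_n) be nondecreasing tuples of rational numbers with ν'_1 + … + ν'_n = ν_1 + … + ν_n, with s_j(ν') ≥ s_j(ν) for all 1 ≤ j ≤ n, and with ν' ≠ ν. Then there exists an index 1 ≤ j < n with ν_j < ν_{j+1} and s_j(ν') > s_j(ν). (Break-point separation for comparable Newton points, used in the proofs of Lemma 2.2(3) and Remark 2.3: if ν' ≼ ν and ν' ≠ ν then pr_(j)(ν') ≠ pr_(j)(ν) for some break point j of ν.) -/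
/-- Break-point separation for comparable tuples (used in the proofs of
Lemma 2.2(3) and Remark 2.3): if `ν'` and `ν` are nondecreasing tuples of length
`n` with equal total sums, `s_j(ν') ≥ s_j(ν)` for all `j`, and `ν' ≠ ν` (as
tuples), then there is a break point `j` of `ν` (i.e. `0 < j < n` with
`ν (j-1) < ν j`) with `s_j(ν') > s_j(ν)`. Here `s_j` is the sum of the first `j`
entries (0-indexed). -/
theorem exists_breakpoint_strict (n : ℕ) (hn : 1 ≤ n) (ν' ν : ℕ → ℚ)
    (hmono' : ∀ i, i + 1 < n → ν' i ≤ ν' (i + 1))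
    (hmono : ∀ i, i + 1 < n → ν i ≤ ν (i + 1))
    (hsum : ∑ i ∈ Finset.range n, ν' i = ∑ i ∈ Finset.range n, ν i)
    (hdom : ∀ j, 1 ≤ j → j ≤ n →
      ∑ i ∈ Finset.range j, ν i ≤ ∑ i ∈ Finset.range j, ν' i)
    (hne : ∃ i, i < n ∧ ν' i ≠ ν i) :
    ∃ j, 0 < j ∧ j < n ∧ ν (j - 1) < ν j ∧
      ∑ i ∈ Finset.range j, ν i < ∑ i ∈ Finset.range j, ν' i := by
  classical
  by_contra hcon
  push Not at hcon
  obtain ⟨hi, hd⟩ := Nat.find_spec hne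
  have hmin : ∀ m, m < Nat.find hne → ν' m = ν m := by
    intro m hm
    by_contra h
    exact Nat.find_min hne hm ⟨by omega, h⟩
  generalize Nat.find hne = i at hi hd hmin
  have h0 : ∑ m ∈ Finset.range i, ν' m = ∑ m ∈ Finset.range i, ν m :=
    Finset.sum_congr rfl fun m hm => hmin m (Finset.mem_range.mp hm)
  have key : ∀ t, i + t < n → ν (i + t) < ν' (i + t) ∧
      ∑ m ∈ Finset.range (i + t + 1), ν m < ∑ m ∈ Finset.range (i + t + 1), ν' m := by
    intro t
    induction t with
    | zero =>
      intro _
      have h1 := hdom (i + 1) (by omega) (by omega)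
      rw [Finset.sum_range_succ, Finset.sum_range_succ, h0] at h1
      have h2 : ν i < ν' i := lt_of_le_of_ne (by linarith) (Ne.symm hd)
      refine ⟨h2, ?_⟩
      simp only [Nat.add_zero]
      rw [Finset.sum_range_succ, Finset.sum_range_succ, h0]
      linarith
    | succ t ih =>
      intro ht
      rw [← Nat.add_assoc] at ht ⊢
      obtain ⟨h1, h2⟩ := ih (by omega)
      have h3 : ν (i + t + 1) ≤ ν (i + t) := by
        by_contra h
        have h4 := hcon (i + t + 1) (by omega) ht (by simpa using h)
        linarith
      have h5 := hmono' (i + t) ht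
      refine ⟨by linarith, ?_⟩
      rw [Finset.sum_range_succ _ (i + t + 1), Finset.sum_range_succ _ (i + t + 1)]
      linarith
  have hl := (key (n - 1 - i) (by omega)).2
  rw [show i + (n - 1 - i) + 1 = n by omega] at hl
  linarith
end

section
/- Let p be a prime, q a power of p, and k an algebraically closed field of characteristic p. Let σ denote the ring endomorphism of k((z)) applying a ↦ a^q to each coefficient of a Laurent series, applied entrywise to matrices. Fix n ≥ 1 and d ∈ ℤ and let ν ∈ N_d(n) be a Newton point. Write the distinct values of ν as λ_1 < … < λ_r with multiplicities n_1, …, n_r (so n_1 + … + n_r = n), and set m_i = n_i·λ_i, which is an integer by the integrality of break points. For r' ≥ 1 let P(r') be the r'×r' matrix over k((z)) with P(r')·e_l = e_{l+1} for l < r' and P(r')·e_{r'} = z·e_1, and let x_ν ∈ GL_n(k((z))) be the block diagonal matrix with diagonal blocks P(n_1)^{m_1}, …, P(n_r)^{m_r}. Let K = GL_n(k[[z]]), the group of n×n matrices over k[[z]] invertible over k[[z]]. Then for every nondecreasing tuple μ = (μ_1, …, μ_n) of integers with μ_1 + … + μ_n = d and with s_j(ν) ≥ s_j(μ) for all 1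 ≤ j ≤ n (i.e. ν ≼ μ), there exists g ∈ GL_n(k((z))) such that g^{−1}·x_ν·σ(g) ∈ K·diag(z^{μ_1}, …, z^{μ_n})·K. (Converse of Mazur's inequality, Corollary 1.3, for G = GL_n: x_ν is a representative of the σ-conjugacy class with Newton point ν and Kottwitz point d, and the conclusion says [x_ν] ∩ K z^μ K ≠ ∅.) -/
/-- The start index (cumulative multiplicity) of the `i`-th block. -/
def cum {r : ℕ} (nn : Fin r → ℕ) (i : Fin r) : ℕ := ∑ i' ∈ Finset.Iio i, nn i'

/-- A Laurent series lies in the power-series subring `k[[z]] ⊆ k((z))`. -/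
def IsPowerSeries {k : Type*} [Field k] (f : LaurentSeries k) : Prop :=
  ∀ t : ℤ, t < 0 → f.coeff t = 0

section ConverseMazurAux

open Polynomial

/-- Coefficientwise ring endomorphism of Laurent series. -/
noncomputable def lsMap {k : Type*} [Field k] (φ : k →+* k) :
    LaurentSeries k →+* LaurentSeries k where
  toFun f := HahnSeries.map f φ
  map_one' := by ext t; simp [HahnSeries.coeff_one]
  map_zero' := by ext t; simp
  map_add' a b := by ext t; simp
  map_mul' a b := by
    exact HahnSeries.map_mul (φ : k →ₙ+* k)

lemma lsMap_coeff {k : Type*} [Field k] (φ : k →+* k) (f : LaurentSeries k) (t : ℤ) :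
    (lsMap φ f).coeff t = φ (f.coeff t) := rfl

lemma lsMap_single {k : Type*} [Field k] (φ : k →+* k) (t : ℤ) (a : k) :
    lsMap φ (HahnSeries.single t a) = HahnSeries.single t (φ a) := by
  ext u
  rw [lsMap_coeff, HahnSeries.coeff_single, HahnSeries.coeff_single]
  split_ifs <;> simp

/-- the semilinear operator `w ↦ x σ(w)`, linear over the fixed field -/
noncomputable def Fop {L : Type*} [Field L] (σ : L →+* L) {n : ℕ}
    (x : Matrix (Fin n) (Fin n) L) :
    Module.End (σ.eqLocusField (RingHom.id L)) (Fin n → L) where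
  toFun w := x.mulVec (fun i => σ (w i))
  map_add' a b := by
    rw [← Matrix.mulVec_add]; congr 1; ext i; simp
  map_smul' c w := by
    have hc : σ (c : L) = c := c.2
    have : (fun i => σ ((c • w) i)) = (c : L) • (fun i => σ (w i)) := by
      ext i
      change σ ((c : L) * w i) = (c : L) * σ (w i)
      rw [map_mul, hc]
    rw [this, Matrix.mulVec_smul]
    rfl

lemma Fop_apply {L : Type*} [Field L] (σ : L →+* L) {n : ℕ}
    (x : Matrix (Fin n) (Fin n) L) (w : Fin n → L) :
    Fop σ x w = x.mulVec (fun i => σ (w i)) := rfl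

lemma Fop_smul {L : Type*} [Field L] (σ : L →+* L) {n : ℕ}
    (x : Matrix (Fin n) (Fin n) L) (c : L) (w : Fin n → L) :
    Fop σ x (c • w) = σ c • Fop σ x w := by
  rw [Fop_apply, Fop_apply, ← Matrix.mulVec_smul]
  congr 1; ext i; simp

/-- Lemma A -/
lemma cyclic_sum {E L N : Type*} [Field E] [Field L] [Algebra E L] [AddCommGroup N] [Module E N]
    [Module L N] [IsScalarTower E L N] (F : Module.End E N) {r n : ℕ}
    (P : Fin r → E[X]) (hcop : ∀ i j, i ≠ j → IsCoprime (P i) (P j))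
    (hmon : ∀ i, (P i).Monic) (hdeg : (∏ i, P i).natDegree = n)
    (v : Fin r → N) (hv : ∀ i, aeval F (P i) (v i) = 0)
    (hspan : ∀ W : Submodule L N, (∀ i (j : ℕ), (F ^ j) (v i) ∈ W) → W = ⊤) :
    aeval F (∏ i, P i) (∑ i, v i) = 0 ∧
      Submodule.span L (Set.range fun j : Fin n => (F ^ (j : ℕ)) (∑ i, v i)) = ⊤ := by
  classical
  have hdvd : ∀ (p : E[X]) i, P i ∣ p → aeval F p (v i) = 0 := by
    rintro p i ⟨s, rfl⟩
    rw [mul_comm, map_mul, Module.End.mul_apply, hv, map_zero]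
  have h0 : aeval F (∏ i, P i) (∑ i, v i) = 0 := by
    rw [map_sum]
    exact Finset.sum_eq_zero fun i _ => hdvd _ _ (Finset.dvd_prod_of_mem _ (Finset.mem_univ i))
  have hM : (∏ i, P i).Monic := monic_prod_of_monic _ _ fun i _ => hmon i
  refine ⟨h0, ?_⟩
  set W := Submodule.span L (Set.range fun j : Fin n => (F ^ (j : ℕ)) (∑ i, v i)) with hW
  have key : ∀ p : E[X], aeval F p (∑ i, v i) ∈ W := by
    intro p
    have h1 : aeval F p (∑ i, v i) = aeval F (p %ₘ ∏ i, P i) (∑ i, v i) := by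
      conv_lhs => rw [← modByMonic_add_div p (∏ i, P i)]
      rw [mul_comm (∏ i, P i), map_add, map_mul, LinearMap.add_apply, Module.End.mul_apply, h0,
        map_zero, add_zero]
    rw [h1]
    rcases Nat.eq_zero_or_pos n with hn | hn
    · subst hn
      have : ∏ i, P i = 1 := hM.natDegree_eq_zero.mp hdeg
      rw [this, modByMonic_one]; simp
    have hlt : (p %ₘ ∏ i, P i).natDegree < n := by
      rw [← hdeg]
      apply natDegree_modByMonic_lt _ hM
      intro h; rw [h] at hdeg; simp at hdeg; omega
    rw [aeval_eq_sum_range' hlt, LinearMap.sum_apply]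
    refine Submodule.sum_mem _ fun j hj => ?_
    rw [LinearMap.smul_apply, ← algebraMap_smul L]
    refine Submodule.smul_mem _ _ (Submodule.subset_span ⟨⟨j, Finset.mem_range.mp hj⟩, rfl⟩)
  apply hspan
  intro i j
  have hc : IsCoprime (P i) (∏ i' ∈ Finset.univ.erase i, P i') :=
    IsCoprime.prod_right fun i' hi' => hcop _ _ (Finset.ne_of_mem_erase hi').symm
  obtain ⟨a, b, hab⟩ := hc
  have h2 : aeval F (b * ∏ i' ∈ Finset.univ.erase i, P i') (∑ i, v i) = v i := by
    rw [map_sum, Finset.sum_eq_single i]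
    · rw [eq_sub_of_add_eq' hab, map_sub, LinearMap.sub_apply, hdvd _ _ (dvd_mul_left _ _)]
      simp
    · intro i' _ hi'
      exact hdvd _ _ (Dvd.dvd.mul_left (Finset.dvd_prod_of_mem _ (by simp [hi'])) _)
    · simp
  have h3 := key (X ^ j * (b * ∏ i' ∈ Finset.univ.erase i, P i'))
  rw [map_mul, Module.End.mul_apply, h2] at h3
  simpa using h3

lemma coprime_slopes {E : Type*} [Field E] (a b : E) (n1 n2 : ℕ) (h : a ^ n2 ≠ b ^ n1) :
    IsCoprime (X ^ n1 - C a) (X ^ n2 - C b : E[X]) := by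
  have h1 : (X ^ n1 - C a : E[X]) ∣ (X ^ n1) ^ n2 - (C a) ^ n2 := sub_dvd_pow_sub_pow _ _ _
  have h2 : (X ^ n2 - C b : E[X]) ∣ (X ^ n2) ^ n1 - (C b) ^ n1 := sub_dvd_pow_sub_pow _ _ _
  obtain ⟨s, hs⟩ := h1
  obtain ⟨t, ht⟩ := h2
  have hne : b ^ n1 - a ^ n2 ≠ 0 := sub_ne_zero.mpr (Ne.symm h)
  refine ⟨C (b ^ n1 - a ^ n2)⁻¹ * s, - (C (b ^ n1 - a ^ n2)⁻¹ * t), ?_⟩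
  have e : (X ^ n1 - C a) * s - (X ^ n2 - C b) * t = C (b ^ n1 - a ^ n2) := by
    rw [← hs, ← ht, ← pow_mul, ← pow_mul, mul_comm n2 n1]
    simp
  calc _ = C (b ^ n1 - a ^ n2)⁻¹ * ((X ^ n1 - C a) * s - (X ^ n2 - C b) * t) := by ring
    _ = 1 := by rw [e, ← C_mul, inv_mul_cancel₀ hne, C_1]

lemma exists_theta {k : Type*} [Field k] [IsAlgClosed k] (p : ℕ) [CharP k p] (hp : p.Prime)
    (s : ℕ) (hs : 0 < s) (n : ℕ) (hn : 0 < n) :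
    ∃ θ : k, θ ^ (p ^ s) ^ n = θ ∧ ∀ i < n, ∀ j < n, θ ^ (p ^ s) ^ i = θ ^ (p ^ s) ^ j → i = j := by
  set q := p ^ s with hq
  have hq2 : 2 ≤ q := by
    calc 2 ≤ p := hp.two_le
      _ ≤ p ^ s := Nat.le_self_pow hs.ne' p
  have hqn : q ≤ q ^ n := Nat.le_self_pow hn.ne' q
  have : NeZero ((q ^ n - 1 : ℕ) : k) := by
    constructor
    rw [Nat.cast_sub (by omega)]
    have : ((q : ℕ) : k) = 0 := by
      rw [hq, Nat.cast_pow, CharP.cast_eq_zero, zero_pow hs.ne']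
    rw [Nat.cast_pow, this, zero_pow hn.ne']
    simp
  obtain ⟨θ, hθ⟩ := HasEnoughRootsOfUnity.exists_primitiveRoot k (q ^ n - 1)
  refine ⟨θ, ?_, ?_⟩
  · have := hθ.pow_eq_one
    calc θ ^ q ^ n = θ ^ (q ^ n - 1 + 1) := by congr 1; omega
      _ = θ := by rw [pow_succ, this, one_mul]
  · intro i hi j hj hij
    rcases Nat.lt_or_ge 1 n with h1 | h1
    · have hb : ∀ i < n, q ^ i < q ^ n - 1 := by
        intro i hi
        have h2 : q ^ (i + 1) ≤ q ^ n := Nat.pow_le_pow_right (by omega) hi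
        rcases Nat.eq_zero_or_pos i with h0 | h0
        · have : q ^ 2 ≤ q ^ n := Nat.pow_le_pow_right (by omega) h1
          have h4 : 4 ≤ q ^ 2 := by nlinarith
          subst h0; rw [pow_zero]; omega
        · have : q ≤ q ^ i := Nat.le_self_pow h0.ne' q
          rw [pow_succ] at h2
          have : q ^ i * 2 ≤ q ^ i * q := Nat.mul_le_mul_left _ hq2
          omega
      exact Nat.pow_right_injective hq2 (hθ.pow_inj (hb i hi) (hb j hj) hij)
    · omega

lemma vander_mem {L N : Type*} [Field L] [AddCommGroup N] [Module L N] (W : Submodule L N) {h : ℕ}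
    (y : Fin h → L) (hy : Function.Injective y) (b : Fin h → N)
    (hW : ∀ i, ∑ l : Fin h, y i ^ (l : ℕ) • b l ∈ W) (l : Fin h) : b l ∈ W := by
  have hdet : IsUnit (Matrix.vandermonde y).det :=
    (Matrix.det_vandermonde_ne_zero_iff.mpr hy).isUnit
  have hinv := Matrix.nonsing_inv_mul _ hdet
  have : b l = ∑ i, (Matrix.vandermonde y)⁻¹ l i • ∑ l' : Fin h, y i ^ (l' : ℕ) • b l' := by
    simp only [Finset.smul_sum, smul_smul]
    rw [Finset.sum_comm]
    simp only [← Finset.sum_smul]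
    have h1 : ∀ l' : Fin h, ∑ i, (Matrix.vandermonde y)⁻¹ l i * y i ^ (l' : ℕ) =
        (1 : Matrix (Fin h) (Fin h) L) l l' := by
      intro l'
      rw [← hinv, Matrix.mul_apply]
      rfl
    simp only [h1, Matrix.one_apply, ite_smul, one_smul, zero_smul]
    simp
  rw [this]
  exact Submodule.sum_mem _ fun i _ => Submodule.smul_mem _ _ (hW i)

lemma block_vec {k : Type*} [Field k] (q : ℕ) (φ : k →+* k) (hφ : ∀ a, φ a = a ^ q)
    {E N : Type*} [Field E] [AddCommGroup N] [Module E N]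
    [Module (LaurentSeries k) N] (F : Module.End E N) (n : ℕ) (hn : 0 < n) (m : ℤ)
    (θ : k) (hθ : θ ^ q ^ n = θ)
    (hinj : ∀ i < n, ∀ j < n, θ ^ q ^ i = θ ^ q ^ j → i = j)
    (e : ℤ → N) (hF : ∀ (c : LaurentSeries k) t, F (c • e t) = lsMap φ c • e (t + m))
    (hper : ∀ s t : ℤ, e (t + s * n) = (HahnSeries.single s (1 : k) : LaurentSeries k) • e t) :
    ∃ v : N, (F ^ n) v = (HahnSeries.single m (1 : k) : LaurentSeries k) • v ∧
      ∀ W : Submodule (LaurentSeries k) N, (∀ j : ℕ, (F ^ j) v ∈ W) → ∀ t, e t ∈ W := by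
  have hZ : ∀ s t : ℤ, (HahnSeries.single s (1 : k) : LaurentSeries k) * HahnSeries.single t 1 =
      HahnSeries.single (s + t) 1 := by intro s t; simp
  set h := Int.gcd n m with hh
  have hhpos : 0 < h := Int.gcd_pos_of_ne_zero_left _ (by omega)
  obtain ⟨n', hn'⟩ : h ∣ n := by exact_mod_cast (Int.gcd_dvd_left (n : ℤ) m)
  obtain ⟨m', hm'⟩ : (h : ℤ) ∣ m := Int.gcd_dvd_right (n : ℤ) m
  have hn'pos : 0 < n' := by
    rcases Nat.eq_zero_or_pos n' with h0 | h0
    · subst h0; omega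
    · exact h0
  let v : N := ∑ l : Fin h, (HahnSeries.single 0 (θ ^ (l : ℕ)) : LaurentSeries k) • e (l : ℕ)
  have hFj : ∀ j : ℕ, (F ^ j) v = ∑ l : Fin h,
      (HahnSeries.single 0 ((θ ^ q ^ j) ^ (l : ℕ)) : LaurentSeries k) • e ((l : ℕ) + j * m) := by
    intro j
    induction j with
    | zero => simp [v]
    | succ j ih =>
      rw [pow_succ', Module.End.mul_apply, ih, map_sum]
      refine Finset.sum_congr rfl fun l _ => ?_
      rw [hF, lsMap_single, hφ]
      congr 2
      · rw [pow_succ q j, pow_mul θ]; exact pow_right_comm _ _ _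
      · push_cast; ring
  refine ⟨v, ?_, ?_⟩
  · rw [hFj]
    simp only [v, Finset.smul_sum]
    refine Finset.sum_congr rfl fun l _ => ?_
    rw [hθ, mul_comm (n : ℤ) m, hper, smul_comm]
  · intro W hW
    have hpinj : ∀ j : ℕ, Function.Injective fun a : k => a ^ q ^ j := by
      intro j
      induction j with
      | zero => intro a b; simp
      | succ j ih =>
        intro a b hab
        apply φ.injective
        apply ih
        simp only [hφ] at hab ⊢
        rw [← pow_mul, ← pow_mul, ← pow_succ']
        exact hab
    have h1 : ∀ (j0 : ℕ) (l : Fin h), e ((l : ℕ) + j0 * m) ∈ W := by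
      intro j0
      apply vander_mem W
        (fun i : Fin h => (HahnSeries.single 0 (θ ^ q ^ (j0 + n' * i)) : LaurentSeries k))
      · intro i i' hii
        have h2 := HahnSeries.single_injective _ hii
        have h3 : ∀ i : Fin h, θ ^ q ^ (j0 + n' * (i : ℕ)) = (θ ^ q ^ (n' * (i : ℕ))) ^ q ^ j0 := by
          intro i; rw [← pow_mul, ← pow_add, add_comm]
        rw [h3, h3] at h2
        have h4 := hpinj _ h2
        have hb : ∀ i : Fin h, n' * (i : ℕ) < n := by
          intro i; rw [hn', mul_comm h]
          exact Nat.mul_lt_mul_of_pos_left i.2 hn'pos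
        have h5 := hinj _ (hb i) _ (hb i') h4
        exact Fin.ext (Nat.eq_of_mul_eq_mul_left hn'pos h5)
      · intro i
        have h2 := hW (j0 + n' * i)
        rw [hFj] at h2
        have h3 := W.smul_mem (HahnSeries.single (-(m' * i)) (1 : k)) h2
        convert h3 using 1
        rw [Finset.smul_sum]
        refine Finset.sum_congr rfl fun l _ => ?_
        have h4 : ((l : ℕ) : ℤ) + ((j0 + n' * (i : ℕ) : ℕ) : ℤ) * m =
            ((l : ℕ) + j0 * m) + (m' * i) * n := by
          have : (n : ℤ) = h * n' := by exact_mod_cast hn'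
          push_cast
          linear_combination (n' * (i : ℕ) : ℤ) * hm' - m' * (i : ℕ) * this
        rw [h4, hper, smul_smul, smul_smul]
        congr 1
        simp [HahnSeries.single_pow]
    intro t
    have hbez : (h : ℤ) = n * Int.gcdA n m + m * Int.gcdB n m := Int.gcd_eq_gcd_ab _ _
    have hnz : (n : ℤ) ≠ 0 := by omega
    have hhz : (h : ℤ) ≠ 0 := by omega
    set c := (t / h) * Int.gcdB n m with hc
    have hl0 := Int.emod_nonneg t hhz
    have hl1 := Int.emod_lt_of_pos t (show (0 : ℤ) < h by omega)
    have hj0 := Int.emod_nonneg c hnz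
    have h2 := h1 (c % n).toNat ⟨(t % h).toNat, by omega⟩
    have h3 : t = (((t % h).toNat : ℕ) + ((c % n).toNat : ℕ) * m) +
        ((t / h) * Int.gcdA n m + (c / n) * m) * n := by
      rw [Int.toNat_of_nonneg hl0, Int.toNat_of_nonneg hj0]
      have e1 := Int.emod_add_mul_ediv t h
      have e2 := Int.emod_add_mul_ediv c n
      have e3 : c % n = c - n * (c / n) := by linarith
      have e4 : t % h = t - h * (t / h) := by linarith
      rw [e3, e4]
      linear_combination (t / h) * hbez - m * hc
    rw [h3, hper]
    exact W.smul_mem _ h2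

/-- companion-like matrix -/
def cA {L : Type*} [Field L] {N : ℕ} (u : Fin (N + 1) → L) :
    Matrix (Fin (N + 1)) (Fin (N + 1)) L :=
  fun a b => if b = 0 then u a else if (a : ℕ) + 1 = b then 1 else 0

/-- its inverse -/
def cAi {L : Type*} [Field L] {N : ℕ} (u : Fin (N + 1) → L) (ε : L) :
    Matrix (Fin (N + 1)) (Fin (N + 1)) L :=
  fun a c => if (c : ℕ) < N then (if (a : ℕ) = c + 1 then 1 else 0) else
    (Fin.cases ε (fun b : Fin N => - ε * u b.castSucc) a : L)

lemma cA_mul_cAi {L : Type*} [Field L] {N : ℕ} (u : Fin (N + 1) → L) (ε : L)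
    (h : ε * u (Fin.last N) = 1) : cA u * cAi u ε = 1 := by
  ext i c
  rw [Matrix.mul_apply, Fin.sum_univ_succ]
  have h1 : ∀ b : Fin N, cA u i b.succ = if (i : ℕ) = b then 1 else 0 := by
    intro b; simp [cA]
  have h0 : cA u i 0 = u i := by simp [cA]
  simp only [h1, h0]
  by_cases hc : (c : ℕ) < N
  · have h2 : ∀ a, cAi u ε a c = if (a : ℕ) = c + 1 then 1 else 0 := by
      intro a; simp [cAi, hc]
    simp only [h2]
    rw [Finset.sum_eq_single ⟨c, hc⟩]
    · have e : (i = c) = ((i : ℕ) = c) := propext Fin.ext_iff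
      rw [Matrix.one_apply]
      simp only [e]
      simp
    · intro b _ hb
      have : (b : ℕ) ≠ c := fun h => hb (Fin.ext h)
      simp [this]
    · simp
  · have h2 : cAi u ε 0 c = ε := by simp [cAi, hc]
    have h3 : ∀ b : Fin N, cAi u ε b.succ c = - ε * u b.castSucc := by
      intro b; simp [cAi, hc]
    have hcl : c = Fin.last N := Fin.ext (by have := c.2; simp; omega)
    subst hcl
    simp only [h2, h3]
    refine Fin.lastCases ?_ (fun i => ?_) i
    · rw [Finset.sum_eq_zero]
      · rw [add_zero, mul_comm, h]; simp
      · intro b _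
        have : N ≠ b := by have := b.2; omega
        simp [this]
    · rw [Finset.sum_eq_single i]
      · have : i.castSucc ≠ Fin.last N := Fin.castSucc_ne_last i
        simp [this]
        ring
      · intro b _ hb
        have : (i : ℕ) ≠ b := fun h => hb (Fin.ext h.symm)
        simp [this]
      · simp

lemma lattice_mat {k : Type*} [Field k] {N : ℕ} (φ : k →+* k)
    (x : Matrix (Fin (N + 1)) (Fin (N + 1)) (LaurentSeries k)) (v : Fin (N + 1) → LaurentSeries k)
    (w : Fin (N + 1) → LaurentSeries k)
    (hrel : (Fop (lsMap φ) x ^ (N + 1)) v = ∑ a, w a • (Fop (lsMap φ) x ^ (N - (a : ℕ))) v)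
    (hspan : Submodule.span (LaurentSeries k)
      (Set.range fun j : Fin (N + 1) => (Fop (lsMap φ) x ^ (j : ℕ)) v) = ⊤)
    (S μ : ℕ → ℤ) (hS0 : S 0 = 0) (hS : ∀ i, S (i + 1) = S i + μ i) :
    ∃ g gi : Matrix (Fin (N + 1)) (Fin (N + 1)) (LaurentSeries k), g * gi = 1 ∧ gi * g = 1 ∧
      gi * x * g.map (lsMap φ) =
        cA (fun a => w a * HahnSeries.single (- S (a + 1)) (1 : k)) *
          Matrix.diagonal (fun i : Fin (N + 1) => HahnSeries.single (μ (i : ℕ)) (1 : k)) := by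
  have hZ : ∀ s t : ℤ, (HahnSeries.single s (1 : k) : LaurentSeries k) * HahnSeries.single t 1 =
      HahnSeries.single (s + t) 1 := by intro s t; simp
  have hZ0 : (HahnSeries.single (0 : ℤ) (1 : k) : LaurentSeries k) = 1 := rfl
  set F := Fop (lsMap φ) x with hF
  let col : Fin (N + 1) → Fin (N + 1) → LaurentSeries k := fun i =>
    (HahnSeries.single (S (i + 1)) (1 : k) : LaurentSeries k) • (F ^ (N - (i : ℕ))) v
  let g : Matrix (Fin (N + 1)) (Fin (N + 1)) (LaurentSeries k) := fun a i => col i a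
  have hcol : ⊤ ≤ Submodule.span (LaurentSeries k) (Set.range col) := by
    rw [← hspan, Submodule.span_le]
    rintro _ ⟨j, rfl⟩
    have h1 := Submodule.smul_mem _ (HahnSeries.single (- S (N - (j : ℕ) + 1)) (1 : k))
      (Submodule.subset_span (R := LaurentSeries k) (Set.mem_range_self (f := col) (Fin.rev j)))
    have h2 : (Fin.rev j : ℕ) = N - j := by simp [Fin.val_rev]
    have h3 : N - (N - (j : ℕ)) = j := by have := j.2; omega
    simp only [col, h2, h3, smul_smul, hZ, neg_add_cancel, hZ0, one_smul] at h1
    exact h1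
  have hli : LinearIndependent (LaurentSeries k) col :=
    linearIndependent_of_top_le_span_of_card_eq_finrank hcol (by simp)
  have hu : IsUnit g := Matrix.linearIndependent_cols_iff_isUnit.mp hli
  have hdet := (Matrix.isUnit_iff_isUnit_det g).mp hu
  refine ⟨g, g⁻¹, Matrix.mul_nonsing_inv _ hdet, Matrix.nonsing_inv_mul _ hdet, ?_⟩
  suffices h : x * g.map (lsMap φ) = g * (cA (fun a => w a * HahnSeries.single (- S (a + 1)) (1 : k)) *
          Matrix.diagonal (fun i : Fin (N + 1) => HahnSeries.single (μ (i : ℕ)) (1 : k))) by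
    rw [Matrix.mul_assoc, h, ← Matrix.mul_assoc, Matrix.nonsing_inv_mul _ hdet, Matrix.one_mul]
  have hL : ∀ a b, (x * g.map (lsMap φ)) a b = F (col b) a := by
    intro a b
    rfl
  have hFcol : ∀ b, F (col b) =
      (HahnSeries.single (S (b + 1)) (1 : k) : LaurentSeries k) • (F ^ (N - (b : ℕ) + 1)) v := by
    intro b
    rw [hF, Fop_smul, lsMap_single, map_one, pow_succ', Module.End.mul_apply]
  ext1 a b
  rw [hL, hFcol, ← Matrix.mul_assoc, Matrix.mul_diagonal, Matrix.mul_apply]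
  by_cases hb : b = 0
  · subst hb
    have h1 : N - ((0 : Fin (N + 1)) : ℕ) + 1 = N + 1 := by simp
    rw [h1, hrel]
    simp only [Pi.smul_apply, Finset.sum_apply, smul_eq_mul]
    rw [Finset.mul_sum, Finset.sum_mul]
    refine Finset.sum_congr rfl fun i _ => ?_
    have h2 : S (((0 : Fin (N + 1)) : ℕ) + 1) = μ ((0 : Fin (N + 1)) : ℕ) := by
      rw [hS]; simp [hS0]
    rw [h2]
    simp only [g, col, cA, if_true, Pi.smul_apply, smul_eq_mul]
    have h3 := hZ (S (i + 1)) (- S (i + 1))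
    rw [add_neg_cancel, hZ0] at h3
    linear_combination (- (HahnSeries.single (μ ((0 : Fin (N + 1)) : ℕ)) (1 : k)) * w i *
      (F ^ (N - (i : ℕ))) v a) * h3
  · obtain ⟨b, rfl⟩ := Fin.exists_succ_eq.mpr hb
    rw [Finset.sum_eq_single b.castSucc]
    · have h1 : N - ((b.succ : Fin (N + 1)) : ℕ) + 1 = N - (b.castSucc : ℕ) := by
        have := b.2; simp; omega
      simp only [g, col, cA, h1, Pi.smul_apply, smul_eq_mul]
      rw [hS, ← hZ]
      simp only [Fin.succ_ne_zero, if_false, Fin.val_castSucc, Fin.val_succ, if_true]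
      ring
    · intro c _ hc
      have : (c : ℕ) ≠ b := fun h => hc (Fin.ext h)
      simp [cA, this]
    · simp

lemma prod_coeff_supp {k : Type*} [Field k] {r : ℕ} (nn : Fin r → ℕ) (m : Fin r → ℤ) (a : ℕ) (t : ℤ)
    (h : ((∏ i, (X ^ nn i - C (HahnSeries.single (m i) (1 : k) : LaurentSeries k))).coeff a).coeff t
      ≠ 0) : ∃ S : Finset (Fin r), a = ∑ i ∈ Finset.univ \ S, nn i ∧ t = ∑ i ∈ S, m i := by
  classical
  by_contra hcon
  push Not at hcon
  apply h
  rw [Finset.prod_sub, finsetSum_coeff, HahnSeries.coeff_sum]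
  refine Finset.sum_eq_zero fun S _ => ?_
  have hZ : ∀ S : Finset (Fin r), ∏ i ∈ S, (HahnSeries.single (m i) (1 : k) : LaurentSeries k) =
      HahnSeries.single (∑ i ∈ S, m i) 1 := by
    intro S
    induction S using Finset.induction_on with
    | empty => simp
    | insert i S hi ih => rw [Finset.prod_insert hi, Finset.sum_insert hi, ih]; simp
  have h1 : ((-1) ^ S.card * (∏ i ∈ Finset.univ \ S, (X : (LaurentSeries k)[X]) ^ nn i) *
      ∏ i ∈ S, C (HahnSeries.single (m i) (1 : k) : LaurentSeries k)) =
      C (HahnSeries.single (∑ i ∈ S, m i) ((-1) ^ S.card : k) : LaurentSeries k) *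
        X ^ (∑ i ∈ Finset.univ \ S, nn i) := by
    rw [← map_prod, hZ, Finset.prod_pow_eq_pow_sum]
    have : (HahnSeries.single (∑ i ∈ S, m i) ((-1) ^ S.card : k) : LaurentSeries k) =
      (-1) ^ S.card * HahnSeries.single (∑ i ∈ S, m i) 1 := by
      rcases neg_one_pow_eq_or k S.card with h | h <;> rcases Nat.even_or_odd S.card with h' | h' <;>
      simp [h'.neg_one_pow]
    rw [this, C_mul]
    simp
  rw [h1, coeff_C_mul, coeff_X_pow]
  split_ifs with ha
  · rw [mul_one, HahnSeries.coeff_single_of_ne (hcon S ha)]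
  · simp

lemma newton_le {r n : ℕ} (ν : ℕ → ℚ) (hmono : ∀ i, i + 1 < n → ν i ≤ ν (i + 1))
    (lam : Fin r → ℚ) (nn : Fin r → ℕ)
    (hsum : ∀ h : ℚ → ℚ, ∑ t ∈ Finset.range n, h (ν t) = ∑ i, nn i * h (lam i))
    (S : Finset (Fin r)) (j : ℕ) (hj : j = ∑ i ∈ S, nn i) (hjn : j ≤ n) :
    psum ν j ≤ ∑ i ∈ S, (nn i : ℚ) * lam i := by
  set c := ν (j - 1) with hc
  have hm : ∀ a b, a ≤ b → b < n → ν a ≤ ν b := by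
    intro a b hab
    induction b, hab using Nat.le_induction with
    | base => intro _; exact le_rfl
    | succ b hb ih => intro h; exact (ih (by omega)).trans (hmono b h)
  have h1 : ∑ t ∈ Finset.range n, min (ν t - c) 0 = ∑ t ∈ Finset.range j, (ν t - c) := by
    rw [← Finset.sum_range_add_sum_Ico _ hjn, Finset.sum_eq_zero (s := Finset.Ico j n), add_zero]
    · refine Finset.sum_congr rfl fun t ht => ?_
      rw [Finset.mem_range] at ht
      exact min_eq_left (by have := hm t (j - 1) (by omega) (by omega); linarith)
    · intro t ht
      rw [Finset.mem_Ico] at ht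
      exact min_eq_right (by have := hm (j - 1) t (by omega) (by omega); linarith)
  have h2 := hsum (fun y => min (y - c) 0)
  have h3 : ∑ i, (nn i : ℚ) * min (lam i - c) 0 ≤ ∑ i ∈ S, (nn i : ℚ) * min (lam i - c) 0 := by
    rw [← Finset.sum_sdiff (Finset.subset_univ S)]
    have : ∑ i ∈ Finset.univ \ S, (nn i : ℚ) * min (lam i - c) 0 ≤ 0 :=
      Finset.sum_nonpos fun i _ => mul_nonpos_of_nonneg_of_nonpos (by positivity) (min_le_right _ _)
    linarith
  have h4 : ∑ i ∈ S, (nn i : ℚ) * min (lam i - c) 0 ≤ ∑ i ∈ S, (nn i : ℚ) * (lam i - c) :=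
    Finset.sum_le_sum fun i _ => mul_le_mul_of_nonneg_left (min_le_left _ _) (by positivity)
  have h5 : ∑ i ∈ S, (nn i : ℚ) * (lam i - c) = ∑ i ∈ S, (nn i : ℚ) * lam i - j * c := by
    rw [hj]; push_cast; rw [Finset.sum_mul, ← Finset.sum_sub_distrib]
    exact Finset.sum_congr rfl fun i _ => by ring
  have h6 : ∑ t ∈ Finset.range j, (ν t - c) = psum ν j - j * c := by
    simp [psum, Finset.sum_sub_distrib]
  linarith

lemma exists_eqv {r n : ℕ} (nn : Fin r → ℕ) (hsumn : ∑ i, nn i = n) :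
    ∃ e : (Σ i : Fin r, Fin (nn i)) ≃ Fin n, ∀ i l, (e ⟨i, l⟩ : ℕ) = cum nn i + l := by
  refine ⟨finSigmaFinEquiv.trans (finCongr hsumn), fun i l => ?_⟩
  simp only [Equiv.trans_apply, finCongr_apply, Fin.val_cast, finSigmaFinEquiv_apply]
  congr 1
  unfold cum
  refine Finset.sum_bij (fun (a : Fin i) _ => Fin.castLE i.2.le a) ?_ ?_ ?_ ?_
  · intro a _; rw [Finset.mem_Iio, Fin.lt_def]; exact a.2
  · intro a _ b _ h; exact Fin.castLE_injective _ h
  · intro b hb; rw [Finset.mem_Iio, Fin.lt_def] at hb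
    exact ⟨⟨b, hb⟩, Finset.mem_univ _, rfl⟩
  · intro a _; rfl

/-- The basis vectors of a block, extended periodically. -/
lemma block_basis {k : Type*} [Field k] (φ : k →+* k) {n r : ℕ} (nn : Fin r → ℕ) (m : Fin r → ℤ)
    (hpos : ∀ i, 0 < nn i)
    (x : Matrix (Fin n) (Fin n) (LaurentSeries k))
    (hx : ∀ (a b : Fin n) (i : Fin r), cum nn i ≤ (b : ℕ) → (b : ℕ) < cum nn i + nn i →
      x a b = if (cum nn i ≤ (a : ℕ) ∧ (a : ℕ) < cum nn i + nn i) ∧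
          ((a : ℕ) : ℤ) - (cum nn i : ℤ) = (((b : ℕ) : ℤ) - (cum nn i : ℤ) + m i) % (nn i : ℤ)
        then HahnSeries.single ((((b : ℕ) : ℤ) - (cum nn i : ℤ) + m i) / (nn i : ℤ)) (1 : k)
        else 0)
    (eqv : (Σ i : Fin r, Fin (nn i)) ≃ Fin n) (heqv : ∀ i l, (eqv ⟨i, l⟩ : ℕ) = cum nn i + l)
    (i : Fin r) :
    ∃ e : ℤ → (Fin n → LaurentSeries k),
      (∀ (c : LaurentSeries k) t, Fop (lsMap φ) x (c • e t) = lsMap φ c • e (t + m i)) ∧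
      (∀ s t : ℤ, e (t + s * nn i) = (HahnSeries.single s (1 : k) : LaurentSeries k) • e t) ∧
      (∀ l : Fin (nn i), e (l : ℕ) = Pi.single (eqv ⟨i, l⟩) 1) := by
  have hni : (nn i : ℤ) ≠ 0 := by have := hpos i; omega
  have hnip : (0 : ℤ) < nn i := by have := hpos i; omega
  let ix : ℤ → Fin (nn i) := fun t => ⟨(t % nn i).toNat, by
    have h1 := Int.emod_lt_of_pos t hnip
    have h2 := Int.emod_nonneg t hni
    omega⟩
  have hix : ∀ t, ((ix t : ℕ) : ℤ) = t % nn i := fun t => Int.toNat_of_nonneg (Int.emod_nonneg t hni)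
  have hZ0 : (HahnSeries.single (0 : ℤ) (1 : k) : LaurentSeries k) = 1 := rfl
  refine ⟨fun t => Pi.single (eqv ⟨i, ix t⟩) (HahnSeries.single (t / nn i) (1 : k)), ?_, ?_, ?_⟩
  · intro c t
    rw [Fop_smul]
    congr 1
    have h1 : (fun a => lsMap φ ((Pi.single (eqv ⟨i, ix t⟩)
        (HahnSeries.single (t / nn i) (1 : k)) : Fin n → LaurentSeries k) a)) =
        Pi.single (eqv ⟨i, ix t⟩) (HahnSeries.single (t / nn i) (1 : k)) := by
      ext1 a
      by_cases h : a = eqv ⟨i, ix t⟩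
      · subst h; rw [Pi.single_eq_same, lsMap_single, map_one]
      · rw [Pi.single_eq_of_ne h, map_zero]
    rw [Fop_apply, h1, Matrix.mulVec_single]
    ext1 a
    have hb := heqv i (ix t)
    have hlt := (ix t).2
    have hcond : (((eqv ⟨i, ix t⟩ : Fin n) : ℕ) : ℤ) - (cum nn i : ℤ) = t % nn i := by
      rw [hb, ← hix]; push_cast; ring
    simp only [Pi.smul_apply, Matrix.col_apply, MulOpposite.smul_eq_mul_unop, MulOpposite.unop_op]
    rw [hx a _ i (by omega) (by omega), hcond, Int.emod_add_emod]
    have hdiv : (t % nn i + m i) / nn i + t / nn i = (t + m i) / nn i := by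
      have h2 : t + m i = (t % nn i + m i) + (t / nn i) * nn i := by
        have := Int.emod_add_mul_ediv t (nn i)
        linarith
      rw [h2, Int.add_mul_ediv_right _ _ hni]
    have hb' := heqv i (ix (t + m i))
    have hlt' := (ix (t + m i)).2
    have hix' := hix (t + m i)
    by_cases h : a = eqv ⟨i, ix (t + m i)⟩
    · rw [if_pos (by rw [h]; omega), h, Pi.single_eq_same, ← hdiv]
      simp
    · rw [if_neg, Pi.single_eq_of_ne h, zero_mul]
      rintro ⟨_, h3⟩
      apply h
      apply Fin.ext
      omega
  · intro s t
    have h1 : ix (t + s * nn i) = ix t := by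
      apply Fin.ext
      have h2 := hix (t + s * nn i)
      have h3 := hix t
      rw [Int.add_mul_emod_self_right] at h2
      omega
    simp only [h1]
    rw [Int.add_mul_ediv_right _ _ hni, ← Pi.single_smul]
    congr 1
    simp [add_comm]
  · intro l
    have h1 : ix (l : ℕ) = l := by
      apply Fin.ext
      have h2 := hix (l : ℕ)
      rw [Int.emod_eq_of_lt (by omega) (by have := l.2; omega)] at h2
      omega
    simp only [h1]
    rw [Int.ediv_eq_zero_of_lt (by omega) (by have := l.2; omega), hZ0]

end ConverseMazurAux

/-- Converse of Mazur's inequality (Corollary 1.3) for `G = GL_n` over an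
algebraically closed field `k` of characteristic `p`: let `ν` be a Newton point
with endpoint `d`, with distinct slopes `λ_1 < … < λ_r` of multiplicities
`n_1, …, n_r` and integers `m_i = n_i·λ_i`, and let `x = x_ν` be the block
diagonal matrix with blocks `P(n_i)^{m_i}` (described entrywise by `hx`, where
`P(n)^m` has entry `z^{⌊(l+m)/n⌋}` in position `((l+m) mod n, l)` and `0`
elsewhere). Then for every dominant integral coweight `μ` with total `d` and
`ν ≼ μ` there is `g ∈ GL_n(k((z)))` with `g⁻¹·x·σ(g) ∈ K·z^μ·K`, where
`K = GL_n(k[[z]])` and `σ` is the coefficientwise `q`-Frobenius. -/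
theorem converse_mazur_GLn (p : ℕ) (hp : p.Prime) (s : ℕ) (hs : 0 < s)
    (q : ℕ) (hq : q = p ^ s) (k : Type*) [Field k] [IsAlgClosed k] [CharP k p]
    (n : ℕ) (hn : 0 < n) (d : ℤ) (ν : ℕ → ℚ) (hν : IsNewton n d ν)
    (r : ℕ) (lam : Fin r → ℚ) (nn : Fin r → ℕ) (m : Fin r → ℤ)
    (hlam : StrictMono lam) (hpos : ∀ i, 0 < nn i) (hsumn : ∑ i, nn i = n)
    (hval : ∀ (i : Fin r) (j : ℕ), cum nn i ≤ j → j < cum nn i + nn i → ν j = lam i)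
    (hm : ∀ i, (m i : ℚ) = (nn i : ℚ) * lam i)
    (σ : Matrix (Fin n) (Fin n) (LaurentSeries k) → Matrix (Fin n) (Fin n) (LaurentSeries k))
    (hσ : ∀ (A : Matrix (Fin n) (Fin n) (LaurentSeries k)) (i j : Fin n) (t : ℤ),
      (σ A i j).coeff t = ((A i j).coeff t) ^ q)
    (x : Matrix (Fin n) (Fin n) (LaurentSeries k))
    (hx : ∀ (a b : Fin n) (i : Fin r), cum nn i ≤ (b : ℕ) → (b : ℕ) < cum nn i + nn i →
      x a b = if (cum nn i ≤ (a : ℕ) ∧ (a : ℕ) < cum nn i + nn i) ∧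
          ((a : ℕ) : ℤ) - (cum nn i : ℤ) = (((b : ℕ) : ℤ) - (cum nn i : ℤ) + m i) % (nn i : ℤ)
        then HahnSeries.single ((((b : ℕ) : ℤ) - (cum nn i : ℤ) + m i) / (nn i : ℤ)) (1 : k)
        else 0)
    (μ : ℕ → ℤ) (hμmono : ∀ i, i + 1 < n → μ i ≤ μ (i + 1))
    (hμsum : ∑ i ∈ Finset.range n, μ i = d)
    (hdom : ∀ j, 1 ≤ j → j ≤ n → (∑ i ∈ Finset.range j, (μ i : ℚ)) ≤ psum ν j) :
    ∃ g gi : Matrix (Fin n) (Fin n) (LaurentSeries k), g * gi = 1 ∧ gi * g = 1 ∧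
      ∃ a ai b bi : Matrix (Fin n) (Fin n) (LaurentSeries k),
        a * ai = 1 ∧ ai * a = 1 ∧ b * bi = 1 ∧ bi * b = 1 ∧
        (∀ i j, IsPowerSeries (a i j)) ∧ (∀ i j, IsPowerSeries (ai i j)) ∧
        (∀ i j, IsPowerSeries (b i j)) ∧ (∀ i j, IsPowerSeries (bi i j)) ∧
        gi * x * σ g =
          a * Matrix.diagonal (fun i : Fin n => HahnSeries.single (μ (i : ℕ)) (1 : k)) * b := by
  classical
  obtain ⟨N, rfl⟩ : ∃ N, n = N + 1 := ⟨n - 1, by omega⟩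
  have : Fact p.Prime := ⟨hp⟩
  have : ExpChar k p := ExpChar.prime hp
  let φ : k →+* k := iterateFrobenius k p s
  have hφ : ∀ a, φ a = a ^ q := by intro a; rw [hq]; rfl
  have hσ' : ∀ A, σ A = A.map (lsMap φ) := by
    intro A
    ext i j t
    rw [hσ, Matrix.map_apply, lsMap_coeff, hφ]
  obtain ⟨eqv, heqv⟩ := exists_eqv nn hsumn
  -- the polynomials
  let E := (lsMap φ).eqLocusField (RingHom.id (LaurentSeries k))
  let F : Module.End E (Fin (N + 1) → LaurentSeries k) := Fop (lsMap φ) x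
  let zz : ℤ → E := fun t => ⟨HahnSeries.single t (1 : k), by
    change lsMap φ _ = _
    rw [lsMap_single, map_one]; rfl⟩
  have hzz : ∀ t, ((zz t : E) : LaurentSeries k) = HahnSeries.single t 1 := fun t => rfl
  let P : Fin r → Polynomial E := fun i => Polynomial.X ^ nn i - Polynomial.C (zz (m i))
  have hmon : ∀ i, (P i).Monic := fun i => Polynomial.monic_X_pow_sub_C _ (hpos i).ne'
  have hdeg : (∏ i, P i).natDegree = N + 1 := by
    rw [Polynomial.natDegree_prod_of_monic _ _ fun i _ => hmon i, ← hsumn]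
    exact Finset.sum_congr rfl fun i _ => Polynomial.natDegree_X_pow_sub_C
  have hM : (∏ i, P i).Monic := Polynomial.monic_prod_of_monic _ _ fun i _ => hmon i
  have hcop : ∀ i j, i ≠ j → IsCoprime (P i) (P j) := by
    intro i j hij
    apply coprime_slopes
    intro h
    have h1 : ((zz (m i) ^ nn j : E) : LaurentSeries k) = ((zz (m j) ^ nn i : E) : LaurentSeries k) := by
      rw [h]
    push_cast at h1
    rw [hzz, hzz, HahnSeries.single_pow, HahnSeries.single_pow, one_pow, one_pow] at h1
    have h2 := congrArg (fun y : LaurentSeries k => y.coeff (nn j • m i)) h1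
    simp only [HahnSeries.coeff_single] at h2
    have h3 : nn j • m i = nn i • m j := by
      by_contra hne
      rw [if_pos trivial, if_neg hne] at h2
      exact one_ne_zero h2
    simp only [nsmul_eq_mul] at h3
    have h4 : (nn j : ℚ) * m i = nn i * m j := by exact_mod_cast h3
    rw [hm, hm] at h4
    have e1 : (nn i : ℚ) ≠ 0 := by exact_mod_cast (hpos i).ne'
    have e2 : (nn j : ℚ) ≠ 0 := by exact_mod_cast (hpos j).ne'
    have h5 : lam i = lam j := by
      apply mul_left_cancel₀ (mul_ne_zero e1 e2)
      linear_combination h4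
    exact hij (hlam.injective h5)
  -- block vectors
  have hblock : ∀ i, ∃ v : Fin (N + 1) → LaurentSeries k,
      (F ^ nn i) v = (HahnSeries.single (m i) (1 : k) : LaurentSeries k) • v ∧
      ∀ W : Submodule (LaurentSeries k) (Fin (N + 1) → LaurentSeries k),
        (∀ j : ℕ, (F ^ j) v ∈ W) → ∀ l, Pi.single (eqv ⟨i, l⟩) 1 ∈ W := by
    intro i
    obtain ⟨e, he1, he2, he3⟩ := block_basis φ nn m hpos x hx eqv heqv i
    obtain ⟨θ, hθ1, hθ2⟩ := exists_theta (k := k) p hp s hs (nn i) (hpos i)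
    rw [← hq] at hθ1 hθ2
    obtain ⟨v, hv1, hv2⟩ := block_vec q φ hφ F (nn i) (hpos i) (m i) θ hθ1 hθ2 e he1 he2
    exact ⟨v, hv1, fun W hW l => by rw [← he3]; exact hv2 W hW _⟩
  choose v hv1 hv2 using hblock
  have hv : ∀ i, Polynomial.aeval F (P i) (v i) = 0 := by
    intro i
    simp only [P, map_sub, map_pow, Polynomial.aeval_X, Polynomial.aeval_C, LinearMap.sub_apply]
    rw [hv1, Module.algebraMap_end_apply]
    exact sub_self _
  obtain ⟨hf0, hspan⟩ := cyclic_sum (L := LaurentSeries k) F P hcop hmon hdeg v hv (by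
    intro W hW
    have h1 : ∀ b : Fin (N + 1), (Pi.single b 1 : Fin (N + 1) → LaurentSeries k) ∈ W := by
      intro b
      obtain ⟨⟨i, l⟩, rfl⟩ := eqv.surjective b
      exact hv2 i W (hW i) l
    rw [eq_top_iff]
    intro w _
    rw [pi_eq_sum_univ' w]
    exact Submodule.sum_mem _ fun b _ => W.smul_mem _ (h1 b))
  set vv := ∑ i, v i with hvv
  set f := ∏ i, P i with hf
  -- the relation
  let w : Fin (N + 1) → LaurentSeries k := fun a => - ((f.coeff (N - (a : ℕ)) : E) : LaurentSeries k)
  have hrel : (F ^ (N + 1)) vv = ∑ a, w a • (F ^ (N - (a : ℕ))) vv := by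
    rw [Polynomial.aeval_eq_sum_range, hdeg, Finset.sum_range_succ, LinearMap.add_apply] at hf0
    have h1 : f.coeff (N + 1) = 1 := by rw [← hdeg]; exact hM
    rw [h1, one_smul] at hf0
    rw [eq_neg_of_add_eq_zero_right hf0, LinearMap.sum_apply, ← Finset.sum_range_reflect,
      ← Fin.sum_univ_eq_sum_range (fun j => (f.coeff (N + 1 - 1 - j) • F ^ (N + 1 - 1 - j)) vv),
      ← Finset.sum_neg_distrib]
    refine Finset.sum_congr rfl fun a _ => ?_
    simp only [w, Nat.add_sub_cancel, neg_smul]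
    rfl
  let S : ℕ → ℤ := fun j => ∑ i ∈ Finset.range j, μ i
  obtain ⟨g, gi, hg1, hg2, hg3⟩ := lattice_mat φ x vv w hrel hspan S μ (by simp [S])
    (fun i => Finset.sum_range_succ _ _)
  set u : Fin (N + 1) → LaurentSeries k := fun a => w a * HahnSeries.single (- S (a + 1)) (1 : k)
    with hu
  have hcoe : ∀ a, ((f.coeff a : E) : LaurentSeries k) = (∏ i, (Polynomial.X ^ nn i -
      Polynomial.C (HahnSeries.single (m i) (1 : k) : LaurentSeries k))).coeff a := by
    intro a
    have h1 : f.map E.subtype = ∏ i, (Polynomial.X ^ nn i -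
      Polynomial.C (HahnSeries.single (m i) (1 : k) : LaurentSeries k)) := by
      rw [hf, Polynomial.map_prod]
      refine Finset.prod_congr rfl fun i _ => ?_
      simp only [P, Polynomial.map_sub, Polynomial.map_pow, Polynomial.map_X, Polynomial.map_C]
      rfl
    rw [← h1, Polynomial.coeff_map]
    rfl
  have hsum : ∀ h : ℚ → ℚ, ∑ t ∈ Finset.range (N + 1), h (ν t) = ∑ i, nn i * h (lam i) := by
    intro h
    rw [← Fin.sum_univ_eq_sum_range (fun t => h (ν t)), ← eqv.sum_comp, Fintype.sum_sigma]
    refine Finset.sum_congr rfl fun i _ => ?_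
    rw [Finset.sum_congr rfl (g := fun _ => h (lam i))]
    · simp
    · intro l _
      rw [hval i _ (by rw [heqv]; omega) (by rw [heqv]; have := l.2; omega)]
  have hmsum : ∑ i, m i = d := by
    have h1 := hsum id
    have h2 := hν.2.1
    unfold psum at h2
    simp only [id] at h1
    rw [h2] at h1
    have h3 : ((∑ i, m i : ℤ) : ℚ) = d := by
      push_cast; rw [h1]; exact Finset.sum_congr rfl fun i _ => hm i
    exact_mod_cast h3
  have hsd : S (N + 1) = d := hμsum
  -- integrality
  have hintegral : ∀ a, IsPowerSeries (u a) := by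
    intro a t ht
    by_contra hne
    have h1 : (((∏ i, (Polynomial.X ^ nn i -
      Polynomial.C (HahnSeries.single (m i) (1 : k) : LaurentSeries k))).coeff (N - (a : ℕ))).coeff
        (t + S (a + 1))) ≠ 0 := by
      rw [← hcoe]
      intro h0
      apply hne
      have h2 := HahnSeries.coeff_mul_single_add (x := w a) (r := (1 : k)) (a := t + S (a + 1))
        (b := - S (a + 1))
      rw [add_neg_cancel_right] at h2
      rw [hu]
      simp only
      rw [h2, mul_one]
      simp only [w, HahnSeries.coeff_neg, h0, neg_zero]
    obtain ⟨T, hT1, hT2⟩ := prod_coeff_supp nn m _ _ h1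
    have ha := a.2
    have h3 : (a : ℕ) + 1 = ∑ i ∈ T, nn i := by
      have h4 := Finset.sum_sdiff (f := nn) (Finset.subset_univ T)
      omega
    have h5 := newton_le ν hν.1 lam nn hsum T _ h3 (by omega)
    have h6 := hdom ((a : ℕ) + 1) (by omega) (by omega)
    have h7 : ((t + S (a + 1) : ℤ) : ℚ) = ∑ i ∈ T, (nn i : ℚ) * lam i := by
      rw [hT2]; push_cast; exact Finset.sum_congr rfl fun i _ => hm i
    have h8 : ((S (a + 1) : ℤ) : ℚ) = ∑ i ∈ Finset.range ((a : ℕ) + 1), (μ i : ℚ) := by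
      simp only [S]; push_cast; rfl
    have h9 : ((S (a + 1) : ℤ) : ℚ) ≤ ((t + S (a + 1) : ℤ) : ℚ) := by
      rw [h7, h8]; linarith
    have h10 : S (a + 1) ≤ t + S (a + 1) := by exact_mod_cast h9
    omega
  have hulast : u (Fin.last N) = 1 ∨ u (Fin.last N) = -1 := by
    have hZ : ∀ T : Finset (Fin r), ∏ i ∈ T, (HahnSeries.single (m i) (1 : k) : LaurentSeries k) =
        HahnSeries.single (∑ i ∈ T, m i) 1 := by
      intro T
      induction T using Finset.induction_on with
      | empty => simp
      | insert i T hi ih => rw [Finset.prod_insert hi, Finset.sum_insert hi, ih]; simp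
    have h1 : ((f.coeff 0 : E) : LaurentSeries k) = (-1) ^ r * HahnSeries.single d 1 := by
      rw [hcoe, Polynomial.coeff_zero_eq_eval_zero, Polynomial.eval_prod, ← hmsum, ← hZ]
      have h2 : ∀ i, Polynomial.eval 0 (Polynomial.X ^ nn i -
          Polynomial.C (HahnSeries.single (m i) (1 : k) : LaurentSeries k)) =
          (-1) * HahnSeries.single (m i) 1 := by
        intro i; simp [(hpos i).ne']
      simp only [h2]
      rw [Finset.prod_mul_distrib]
      simp
    have h2 : u (Fin.last N) = - (-1) ^ r := by
      simp only [hu, w, Fin.val_last, Nat.sub_self, h1, hsd]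
      have h3 : (HahnSeries.single d (1 : k) : LaurentSeries k) * HahnSeries.single (-d) 1 = 1 := by
        simp
      linear_combination (- (-1) ^ r) * h3
    rw [h2]
    rcases neg_one_pow_eq_or (LaurentSeries k) r with h | h <;> rw [h] <;> simp
  have hps1 : IsPowerSeries (1 : LaurentSeries k) := by
    intro t ht; rw [HahnSeries.coeff_one, if_neg (by omega)]
  have hps0 : IsPowerSeries (0 : LaurentSeries k) := by
    intro t ht; rw [HahnSeries.coeff_zero]
  have hneg : ∀ y : LaurentSeries k, IsPowerSeries y → IsPowerSeries (-y) := by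
    intro y hy t ht; rw [HahnSeries.coeff_neg, hy t ht, neg_zero]
  have hAA : cA u * cAi u (u (Fin.last N)) = 1 := by
    apply cA_mul_cAi
    rcases hulast with h | h <;> rw [h] <;> ring
  refine ⟨g, gi, hg1, hg2, cA u, cAi u (u (Fin.last N)), 1, 1, hAA, mul_eq_one_comm.mp hAA,
    by simp, by simp, ?_, ?_, ?_, ?_, ?_⟩
  · intro i j
    unfold cA
    split_ifs
    exacts [hintegral _, hps1, hps0]
  · intro i j
    unfold cAi
    split_ifs
    · exact hps1
    · exact hps0
    · refine Fin.cases ?_ (fun b => ?_) i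
      · exact hintegral _
      · simp only [Fin.cases_succ]
        rcases hulast with h | h <;> rw [h]
        · rw [neg_one_mul]; exact hneg _ (hintegral _)
        · rw [neg_neg, one_mul]; exact hintegral _
  · intro i j
    rw [Matrix.one_apply]
    split_ifs
    exacts [hps1, hps0]
  · intro i j
    rw [Matrix.one_apply]
    split_ifs
    exacts [hps1, hps0]
  · rw [Matrix.mul_one, hσ']
    exact hg3
end

section
/- Fix integers n ≥ 1 and d and let ν ∈ N_d(n) be a Newton point. Write the distinct values of ν as λ_1 < … < λ_r with multiplicities n_1, …, n_r, and set m_i = n_i·λ_i ∈ ℤ. Then Σ_{j=1}^{n−1} (⌈s_j(ν)⌉ − s_j(ν)) = (1/2)·(n − Σ_{i=1}^{r} gcd(|m_i|, n_i)). (GL_n instance of the identity of Remark 2.1(2): for b with Newton point ν and κ_G(b) = μ̄ one has δ(ν, μ) = ⟨ρ, μ − ν⟩ + (1/2)·def(b), where for GL_n the defect is def(b) = n − Σ_i gcd(|m_i|, n_i), δ(ν, μ) = Σ_j (⌈s_j(ν)⌉ − s_j(μ)) and ⟨ρ, μ − ν⟩ = Σ_j (s_j(ν) − s_j(μ)) for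 any dominant integral μ with ν ≼ μ.) -/
lemma count_dvd (N : ℕ) (hN : 0 < N) (m : ℤ) :
    ((Finset.range N).filter (fun k : ℕ => (N : ℤ) ∣ k * m)).card = Nat.gcd m.natAbs N := by
  obtain ⟨g, a, q, hg, hco, ha, hq⟩ := Nat.exists_coprime' (m := m.natAbs) (n := N)
    (Nat.gcd_pos_of_pos_right _ hN)
  have hgg : Nat.gcd m.natAbs N = g := by
    rw [ha, hq, Nat.gcd_mul_right, hco.gcd_eq_one, one_mul]
  have hq0 : 0 < q := by
    rcases Nat.eq_zero_or_pos q with h | h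
    · subst h; simp at hq; omega
    · exact h
  have key : ∀ k : ℕ, (N : ℤ) ∣ k * m ↔ q ∣ k := by
    intro k
    rw [Int.natCast_dvd, Int.natAbs_mul, Int.natAbs_natCast, ha, hq, ← mul_assoc,
      Nat.mul_dvd_mul_iff_right hg]
    exact hco.symm.dvd_mul_right
  rw [hgg]
  have : (Finset.range N).filter (fun k : ℕ => (N : ℤ) ∣ k * m)
      = (Finset.range g).image (fun t => q * t) := by
    ext k
    simp only [Finset.mem_filter, Finset.mem_range, Finset.mem_image, key]
    constructor
    · rintro ⟨h1, t, rfl⟩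
      refine ⟨t, ?_, rfl⟩
      rw [hq] at h1
      exact Nat.lt_of_mul_lt_mul_left h1
    · rintro ⟨t, ht, rfl⟩
      refine ⟨?_, dvd_mul_right _ _⟩
      rw [hq]
      exact Nat.mul_lt_mul_of_pos_left ht hq0
  rw [this, Finset.card_image_of_injective, Finset.card_range]
  intro x y hxy
  exact Nat.eq_of_mul_eq_mul_left hq0 hxy

lemma ceil_pair (N : ℕ) (hN : 0 < N) (m : ℤ) (l : ℚ) (hm : (m : ℚ) = N * l) (k : ℕ)
    (hk : k ≤ N) :
    ((⌈(k : ℚ) * l⌉ : ℚ) - k * l) + ((⌈((N - k : ℕ) : ℚ) * l⌉ : ℚ) - ((N - k : ℕ) : ℚ) * l)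
      = 1 - (if (N : ℤ) ∣ k * m then 1 else 0) := by
  have hN' : (N : ℚ) ≠ 0 := by positivity
  have e : ((N - k : ℕ) : ℚ) * l = -(k * l) + (m : ℚ) := by
    rw [hm]; push_cast [hk]; ring
  rw [e, Int.ceil_add_intCast, Int.ceil_neg]
  push_cast
  split_ifs with h
  · obtain ⟨c, hc⟩ := h
    have hc' : (k : ℚ) * m = N * c := by exact_mod_cast hc
    have : (k : ℚ) * l = (c : ℚ) := by
      rw [hm] at hc'
      apply mul_left_cancel₀ hN'
      linarith
    rw [this, Int.ceil_intCast, Int.floor_intCast]; ring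
  · have : (⌈(k : ℚ) * l⌉ : ℤ) = ⌊(k : ℚ) * l⌋ + 1 := by
      rw [Int.ceil_eq_iff]
      push_cast
      refine ⟨?_, (Int.lt_floor_add_one _).le⟩
      have h1 := Int.floor_le ((k : ℚ) * l)
      rcases h1.lt_or_eq with h2 | h2
      · linarith
      · exfalso
        apply h
        refine ⟨⌊(k : ℚ) * l⌋, ?_⟩
        have : (k : ℚ) * m = N * (⌊(k : ℚ) * l⌋ : ℚ) := by
          rw [h2, hm]; ring
        exact_mod_cast this
    rw [this]; push_cast; ring

lemma block_sum (N : ℕ) (hN : 0 < N) (m : ℤ) (l : ℚ) (hm : (m : ℚ) = N * l) :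
    ∑ k ∈ Finset.range N, ((⌈(k : ℚ) * l⌉ : ℚ) - k * l)
      = (1 / 2) * ((N : ℚ) - (Nat.gcd m.natAbs N : ℚ)) := by
  set g : ℕ → ℚ := fun k => (⌈(k : ℚ) * l⌉ : ℚ) - k * l with hg
  have g0 : g 0 = 0 := by simp [hg]
  have gN : g N = 0 := by simp only [hg]; rw [← hm]; simp
  have h1 : ∑ k ∈ Finset.range N, g (N - k) = ∑ k ∈ Finset.range N, g k := by
    have a := Finset.sum_range_reflect g (N + 1)
    rw [Finset.sum_range_succ, Finset.sum_range_succ, gN] at a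
    simpa [g0] using a
  have h2 : ∑ k ∈ Finset.range N, (g k + g (N - k))
      = ∑ k ∈ Finset.range N, (1 - (if (N : ℤ) ∣ k * m then (1 : ℚ) else 0)) :=
    Finset.sum_congr rfl fun k hk =>
      ceil_pair N hN m l hm k (Finset.mem_range.1 hk).le
  rw [Finset.sum_add_distrib, h1, Finset.sum_sub_distrib (fun _ => (1 : ℚ)), Finset.sum_boole, count_dvd N hN m] at h2
  simp at h2
  linarith

lemma total_sum (ν : ℕ → ℚ) (r : ℕ) : ∀ (lam : Fin r → ℚ) (nn : Fin r → ℕ) (m : Fin r → ℤ)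
    (_ : ∀ i, 0 < nn i)
    (_ : ∀ (i : Fin r) (j : ℕ), cum nn i ≤ j → j < cum nn i + nn i → ν j = lam i)
    (_ : ∀ i, (m i : ℚ) = (nn i : ℚ) * lam i),
    (∃ z : ℤ, psum ν (∑ i, nn i) = z) ∧
    ∑ j ∈ Finset.range (∑ i, nn i), ((⌈psum ν j⌉ : ℚ) - psum ν j) =
      (1 / 2) * (((∑ i, nn i : ℕ) : ℚ) - ∑ i, (Nat.gcd (m i).natAbs (nn i) : ℚ)) := by
  induction r with
  | zero => intro lam nn m _ _ _; exact ⟨⟨0, by simp [psum]⟩, by simp⟩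
  | succ r ih =>
    intro lam nn m hpos hval hm
    have hc : ∀ i : Fin r, cum nn i.castSucc = cum (fun i => nn i.castSucc) i := by
      intro i
      unfold cum
      rw [← Fin.map_castSuccEmb_Iio, Finset.sum_map]; rfl
    have hl : cum nn (Fin.last r) = ∑ i : Fin r, nn i.castSucc := by
      unfold cum
      rw [Fin.Iio_last_eq_map, Finset.sum_map]; rfl
    obtain ⟨⟨z, hz⟩, hs⟩ := ih (fun i => lam i.castSucc) (fun i => nn i.castSucc)
      (fun i => m i.castSucc) (fun i => hpos _)
      (fun i j h1 h2 => hval i.castSucc j (by rw [hc]; exact h1) (by rw [hc]; exact h2))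
      (fun i => hm _)
    rw [Fin.sum_univ_castSucc, Fin.sum_univ_castSucc]
    have hv := hval (Fin.last r)
    rw [hl] at hv
    set S := ∑ i : Fin r, nn i.castSucc with hS
    have hp : ∀ k, k ≤ nn (Fin.last r) → psum ν (S + k) = z + k * lam (Fin.last r) := by
      intro k hk
      have : psum ν (S + k) = psum ν S + ∑ x ∈ Finset.range k, ν (S + x) := by
        unfold psum; exact Finset.sum_range_add _ _ _
      rw [this, hz, Finset.sum_congr rfl (g := fun _ => lam (Fin.last r))]
      · simp
      · intro x hx
        have := Finset.mem_range.1 hx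
        exact hv _ (by omega) (by omega)
    refine ⟨⟨z + m (Fin.last r), ?_⟩, ?_⟩
    · rw [hp _ le_rfl]; push_cast; rw [hm]
    · rw [Finset.sum_range_add, hs]
      have : ∑ x ∈ Finset.range (nn (Fin.last r)), ((⌈psum ν (S + x)⌉ : ℚ) - psum ν (S + x))
          = (1 / 2) * ((nn (Fin.last r) : ℚ) -
            (Nat.gcd (m (Fin.last r)).natAbs (nn (Fin.last r)) : ℚ)) := by
        rw [← block_sum _ (hpos _) _ _ (hm _)]
        refine Finset.sum_congr rfl fun x hx => ?_
        rw [hp x (Finset.mem_range.1 hx).le, Int.ceil_intCast_add]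
        push_cast; ring
      rw [this]; push_cast; ring



/-- GL_n instance of the identity of Remark 2.1(2): for a Newton point `ν` with
distinct slopes `λ_1 < … < λ_r` of multiplicities `n_1, …, n_r` and integers
`m_i = n_i·λ_i`, one has
`Σ_{j=1}^{n-1} (⌈s_j(ν)⌉ - s_j(ν)) = (1/2)·(n - Σ_i gcd(|m_i|, n_i))`,
the right-hand side being half the defect of an element with Newton point `ν`. -/
theorem delta_eq_half_defect (n : ℕ) (hn : 1 ≤ n) (d : ℤ) (ν : ℕ → ℚ)
    (hν : IsNewton n d ν)
    (r : ℕ) (lam : Fin r → ℚ) (nn : Fin r → ℕ) (m : Fin r → ℤ)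
    (hlam : StrictMono lam) (hpos : ∀ i, 0 < nn i) (hsumn : ∑ i, nn i = n)
    (hval : ∀ (i : Fin r) (j : ℕ), cum nn i ≤ j → j < cum nn i + nn i → ν j = lam i)
    (hm : ∀ i, (m i : ℚ) = (nn i : ℚ) * lam i) :
    ∑ j ∈ Finset.Icc 1 (n - 1), ((⌈psum ν j⌉ : ℚ) - psum ν j) =
      (1 / 2) * ((n : ℚ) - ∑ i, (Nat.gcd (m i).natAbs (nn i) : ℚ)) := by
  have h := (total_sum ν r lam nn m hpos hval hm).2
  rw [hsumn] at h
  rw [← h]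
  obtain ⟨k, rfl⟩ : ∃ k, n = k + 1 := ⟨n - 1, by omega⟩
  rw [Finset.sum_range_succ', Nat.add_sub_cancel, ← Finset.Ico_add_one_right_eq_Icc,
    Finset.sum_Ico_eq_sum_range]
  simp [psum, add_comm]
end
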